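/- Suppose the Fractional assumptions hold for φ, ψ ∈ Φ_w(ℝⁿ). Then ‖χ_Q‖_{L^φ(ℝⁿ)} ≈ |Q|^{α/n}·‖χ_Q‖_{L^ψ(ℝⁿ)}, with implicit constants independent of the cube Q ⊂ ℝⁿ. -/

import Mathlib

open MeasureTheory NNReal ENNReal Filter Set

noncomputable section

/-- `ℝⁿ` with the Euclidean structure. -/
abbrev RSp (n : ℕ) := EuclideanSpace ℝ (Fin n)

variable {n : ℕ}

/-- A cube in `ℝⁿ` with sides parallel to the coordinate axes,
with center `c` and side length `2r`. -/
structure Cube (n : ℕ) where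
  c : RSp n
  r : ℝ
  r_pos : 0 < r

/-- The underlying set of a cube. -/
def Cube.set (Q : Cube n) : Set (RSp n) := {y | ∀ i, |y i - Q.c i| ≤ Q.r}

/-- A weak Φ-function on `Ω` (the class `Φ_w(Ω)`). -/
structure IsWeakPhi (Ω : Set (RSp n)) (φ : RSp n → ℝ≥0 → ℝ≥0∞) : Prop where
  meas : ∀ f : RSp n → ℝ≥0, Measurable f →
    AEMeasurable (fun x => φ x (f x)) (volume.restrict Ω)
  mono : ∀ x ∈ Ω, Monotone (φ x)
  zero : ∀ x ∈ Ω, φ x 0 = 0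
  lim_zero : ∀ x ∈ Ω, Tendsto (fun t : ℝ≥0 => φ x t) (nhdsWithin 0 (Set.Ioi 0)) (nhds 0)
  lim_top : ∀ x ∈ Ω, Tendsto (fun t : ℝ≥0 => φ x t) atTop (nhds ∞)
  almost_inc : ∃ L : ℝ≥0, 1 ≤ L ∧ ∀ x ∈ Ω, ∀ s t : ℝ≥0, 0 < s → s < t →
    φ x s / (s : ℝ≥0∞) ≤ (L : ℝ≥0∞) * (φ x t / (t : ℝ≥0∞))

/-- A convex Φ-function on `Ω` (the class `Φ_c(Ω)`): a weak Φ-function which is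
additionally convex and left-continuous in `t` for a.e. `x ∈ Ω`. -/
structure IsConvexPhi (Ω : Set (RSp n)) (φ : RSp n → ℝ≥0 → ℝ≥0∞)
    extends IsWeakPhi Ω φ : Prop where
  convex : ∀ᵐ x ∂(volume.restrict Ω), ∀ s t a b : ℝ≥0, a + b = 1 →
    φ x (a * s + b * t) ≤ (a : ℝ≥0∞) * φ x s + (b : ℝ≥0∞) * φ x t
  left_cont : ∀ᵐ x ∂(volume.restrict Ω), ∀ t : ℝ≥0,
    Tendsto (φ x) (nhdsWithin t (Set.Iio t)) (nhds (φ x t))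

/-- A strong Φ-function on `Ω` (the class `Φ_s(Ω)`): a weak Φ-function which is
additionally convex and continuous into `[0,∞]` for a.e. `x ∈ Ω`. -/
structure IsStrongPhi (Ω : Set (RSp n)) (φ : RSp n → ℝ≥0 → ℝ≥0∞)
    extends IsWeakPhi Ω φ : Prop where
  convex : ∀ᵐ x ∂(volume.restrict Ω), ∀ s t a b : ℝ≥0, a + b = 1 →
    φ x (a * s + b * t) ≤ (a : ℝ≥0∞) * φ x s + (b : ℝ≥0∞) * φ x t
  cont : ∀ᵐ x ∂(volume.restrict Ω), Continuous (φ x)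

/-- The generalized (left-)inverse `φ⁻¹(x,t) = inf {τ ≥ 0 : φ(x,τ) ≥ t}`. -/
def phiInv (φ : RSp n → ℝ≥0 → ℝ≥0∞) (x : RSp n) (t : ℝ≥0∞) : ℝ≥0∞ :=
  sInf ((fun s : ℝ≥0 => (s : ℝ≥0∞)) '' {s : ℝ≥0 | t ≤ φ x s})

/-- The condition `(aInc)_p` on `Ω`: `t ↦ φ(x,t)/t^p` is almost increasing, uniformly in `x`. -/
def AInc (p : ℝ) (Ω : Set (RSp n)) (φ : RSp n → ℝ≥0 → ℝ≥0∞) : Prop :=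
  ∃ L : ℝ≥0, 1 ≤ L ∧ ∀ x ∈ Ω, ∀ s t : ℝ≥0, 0 < s → s < t →
    φ x s / (s : ℝ≥0∞) ^ p ≤ (L : ℝ≥0∞) * (φ x t / (t : ℝ≥0∞) ^ p)

/-- The condition `(aDec)_q` on `Ω`: `t ↦ φ(x,t)/t^q` is almost decreasing, uniformly in `x`. -/
def ADec (q : ℝ) (Ω : Set (RSp n)) (φ : RSp n → ℝ≥0 → ℝ≥0∞) : Prop :=
  ∃ L : ℝ≥0, 1 ≤ L ∧ ∀ x ∈ Ω, ∀ s t : ℝ≥0, 0 < s → s < t →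
    φ x t / (t : ℝ≥0∞) ^ q ≤ (L : ℝ≥0∞) * (φ x s / (s : ℝ≥0∞) ^ q)

/-- The condition `(A0)` on `Ω`: `β ≤ φ⁻¹(x,1) ≤ 1/β` for a.e. `x ∈ Ω`. -/
def A0 (Ω : Set (RSp n)) (φ : RSp n → ℝ≥0 → ℝ≥0∞) : Prop :=
  ∃ β : ℝ≥0, 0 < β ∧ β ≤ 1 ∧ ∀ᵐ x ∂(volume.restrict Ω),
    (β : ℝ≥0∞) ≤ phiInv φ x 1 ∧ phiInv φ x 1 ≤ (β : ℝ≥0∞)⁻¹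

/-- The condition `(A1)` (on all of `ℝⁿ`). -/
def A1 (φ : RSp n → ℝ≥0 → ℝ≥0∞) : Prop :=
  ∃ β : ℝ≥0, 0 < β ∧ β < 1 ∧ ∀ Q : Cube n, volume Q.set ≤ 1 →
    ∀ᵐ x ∂(volume.restrict Q.set), ∀ᵐ y ∂(volume.restrict Q.set),
      ∀ t : ℝ≥0∞, 1 ≤ t → t ≤ (volume Q.set)⁻¹ →
        (β : ℝ≥0∞) * phiInv φ x t ≤ phiInv φ y t

/-- The condition `(A2)` (on all of `ℝⁿ`). -/
def A2 (φ : RSp n → ℝ≥0 → ℝ≥0∞) : Prop :=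
  ∃ φi : ℝ≥0 → ℝ≥0∞, IsWeakPhi Set.univ (fun _ : RSp n => φi) ∧
  ∃ h : RSp n → ℝ≥0∞, (∫⁻ x, h x) < ∞ ∧ (∃ M : ℝ≥0, ∀ᵐ x ∂(volume : Measure (RSp n)), h x ≤ M) ∧
  ∃ β : ℝ≥0, 0 < β ∧ β ≤ 1 ∧ ∃ s : ℝ≥0, 0 < s ∧
    ∀ᵐ x ∂(volume : Measure (RSp n)), ∀ t : ℝ≥0,
      (φi t ≤ (s : ℝ≥0∞) → φ x (β * t) ≤ φi t + h x) ∧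
      (φ x t ≤ (s : ℝ≥0∞) → φi (β * t) ≤ φ x t + h x)

/-- Membership in the generalized Orlicz space `L^φ(Ω)`. -/
def MemOrlicz (φ : RSp n → ℝ≥0 → ℝ≥0∞) (Ω : Set (RSp n)) (f : RSp n → ℝ) : Prop :=
  AEMeasurable f (volume.restrict Ω) ∧
  ∃ lam : ℝ≥0, 0 < lam ∧ (∫⁻ x in Ω, φ x (lam * ‖f x‖₊) ∂volume) < ∞

/-- The Luxemburg (quasi)norm of `L^φ(Ω)`. -/
def orliczNorm (φ : RSp n → ℝ≥0 → ℝ≥0∞) (Ω : Set (RSp n)) (f : RSp n → ℝ) : ℝ≥0∞ :=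
  sInf ((fun lam : ℝ≥0 => (lam : ℝ≥0∞)) ''
    {lam : ℝ≥0 | 0 < lam ∧ (∫⁻ x in Ω, φ x (‖f x‖₊ / lam) ∂volume) ≤ 1})

/-- The canonical extension of `φ(x,·)` to `[0,∞]`. -/
def phiE (φ : RSp n → ℝ≥0 → ℝ≥0∞) (x : RSp n) (t : ℝ≥0∞) : ℝ≥0∞ :=
  ⨆ (s : ℝ≥0) (_ : (s : ℝ≥0∞) ≤ t), φ x s

/-- The Luxemburg (quasi)norm for `[0,∞]`-valued functions. -/
def orliczNormE (φ : RSp n → ℝ≥0 → ℝ≥0∞) (Ω : Set (RSp n)) (g : RSp n → ℝ≥0∞) : ℝ≥0∞ :=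
  sInf ((fun lam : ℝ≥0 => (lam : ℝ≥0∞)) ''
    {lam : ℝ≥0 | 0 < lam ∧ (∫⁻ x in Ω, phiE φ x (g x / (lam : ℝ≥0∞)) ∂volume) ≤ 1})

/-- The average `b_Q` of `b` over the cube `Q`. -/
def cubeAvg (Q : Cube n) (b : RSp n → ℝ) : ℝ := ⨍ x in Q.set, b x

/-- The BMO seminorm `‖b‖_*`. -/
def bmoNorm (b : RSp n → ℝ) : ℝ≥0∞ :=
  ⨆ Q : Cube n, (volume Q.set)⁻¹ * ∫⁻ x in Q.set, ‖b x - cubeAvg Q b‖₊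

/-- `b ∈ BMO(ℝⁿ)`. -/
def IsBMO (b : RSp n → ℝ) : Prop := LocallyIntegrable b volume ∧ bmoNorm b < ∞

/-- The non-centred Hardy–Littlewood maximal function (over axes-parallel cubes). -/
def maximal (f : RSp n → ℝ) (x : RSp n) : ℝ≥0∞ :=
  ⨆ (Q : Cube n) (_ : x ∈ Q.set), (volume Q.set)⁻¹ * ∫⁻ y in Q.set, (‖f y‖₊ : ℝ≥0∞) ∂volume

/-- The fractional maximal function `M_α`. -/
def fracMaximal (α : ℝ) (f : RSp n → ℝ) (x : RSp n) : ℝ≥0∞ :=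
  ⨆ (Q : Cube n) (_ : x ∈ Q.set),
    volume Q.set ^ (α / (n : ℝ) - 1) * ∫⁻ y in Q.set, (‖f y‖₊ : ℝ≥0∞) ∂volume

/-- The maximal function restricted to subcubes of `Q₀`. -/
def restMaximal (Q₀ : Cube n) (f : RSp n → ℝ) (x : RSp n) : ℝ≥0∞ :=
  ⨆ (Q : Cube n) (_ : x ∈ Q.set) (_ : Q.set ⊆ Q₀.set),
    (volume Q.set)⁻¹ * ∫⁻ y in Q.set, (‖f y‖₊ : ℝ≥0∞) ∂volume

/-- The fractional maximal function restricted to subcubes of `Q₀`. -/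
def restFracMaximal (α : ℝ) (Q₀ : Cube n) (f : RSp n → ℝ) (x : RSp n) : ℝ≥0∞ :=
  ⨆ (Q : Cube n) (_ : x ∈ Q.set) (_ : Q.set ⊆ Q₀.set),
    volume Q.set ^ (α / (n : ℝ) - 1) * ∫⁻ y in Q.set, (‖f y‖₊ : ℝ≥0∞) ∂volume

/-- The sharp maximal function `M♯`. -/
def sharpMaximal (f : RSp n → ℝ) (x : RSp n) : ℝ≥0∞ :=
  ⨆ (Q : Cube n) (_ : x ∈ Q.set),
    (volume Q.set)⁻¹ * ∫⁻ y in Q.set, (‖f y - ⨍ z in Q.set, f z‖₊ : ℝ≥0∞) ∂volume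

/-- The maximal commutator `M_b`. -/
def maximalComm (b f : RSp n → ℝ) (x : RSp n) : ℝ≥0∞ :=
  ⨆ (Q : Cube n) (_ : x ∈ Q.set),
    (volume Q.set)⁻¹ * ∫⁻ y in Q.set, (‖b x - b y‖₊ : ℝ≥0∞) * (‖f y‖₊ : ℝ≥0∞) ∂volume

/-- The fractional maximal commutator `M_{b,α}`. -/
def fracMaximalComm (α : ℝ) (b f : RSp n → ℝ) (x : RSp n) : ℝ≥0∞ :=
  ⨆ (Q : Cube n) (_ : x ∈ Q.set),
    volume Q.set ^ (α / (n : ℝ) - 1) *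
      ∫⁻ y in Q.set, (‖b x - b y‖₊ : ℝ≥0∞) * (‖f y‖₊ : ℝ≥0∞) ∂volume

/-- The commutator `[M,b]f = M(bf) − b·Mf` of the maximal operator. -/
def maximalCommutator (b f : RSp n → ℝ) (x : RSp n) : ℝ :=
  (maximal (fun y => b y * f y) x).toReal - b x * (maximal f x).toReal

/-- The commutator `[M_α,b]f = M_α(bf) − b·M_α f` of the fractional maximal operator. -/
def fracMaximalCommutator (α : ℝ) (b f : RSp n → ℝ) (x : RSp n) : ℝ :=
  (fracMaximal α (fun y => b y * f y) x).toReal - b x * (fracMaximal α f x).toReal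

/-- The Riesz potential `I_α f`. -/
def riesz (α : ℝ) (f : RSp n → ℝ) (x : RSp n) : ℝ :=
  ∫ y, f y / dist x y ^ ((n : ℝ) - α)

/-- The commutator `[I_α, b]f = I_α(bf) − b·I_α f` of the Riesz potential. -/
def rieszCommutator (α : ℝ) (b f : RSp n → ℝ) (x : RSp n) : ℝ :=
  riesz α (fun y => b y * f y) x - b x * riesz α f x

/-- The operator `I_{b,α} f(x) = ∫ |b(x)−b(y)|·|x−y|^{α−n} f(y) dy`. -/
def rieszAbs (α : ℝ) (b f : RSp n → ℝ) (x : RSp n) : ℝ :=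
  ∫ y, |b x - b y| / dist x y ^ ((n : ℝ) - α) * f y

/-- Equivalence `φ ≃ ψ` of Φ-functions. -/
def PhiEquiv (φ ψ : RSp n → ℝ≥0 → ℝ≥0∞) : Prop :=
  ∃ L : ℝ≥0, 1 ≤ L ∧ ∀ x : RSp n, ∀ t : ℝ≥0, ψ x (t / L) ≤ φ x t ∧ φ x t ≤ ψ x (L * t)

/-- Weak equivalence `φ ∼ ψ` of Φ-functions. -/
def PhiWeakEquiv (φ ψ : RSp n → ℝ≥0 → ℝ≥0∞) : Prop :=
  ∃ L : ℝ≥0, 1 ≤ L ∧ ∃ h : RSp n → ℝ≥0∞, (∫⁻ x, h x) < ∞ ∧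
    ∀ᵐ x ∂(volume : Measure (RSp n)), ∀ t : ℝ≥0,
      ψ x t ≤ φ x (L * t) + h x ∧ φ x t ≤ ψ x (L * t) + h x

/-- The relation `φ⁻¹(x,t) ≈ t^{α/n}·ψ⁻¹(x,t)` with constants independent of `x` and `t > 0`. -/
def FracInvRel (α : ℝ) (φ ψ : RSp n → ℝ≥0 → ℝ≥0∞) : Prop :=
  ∃ c₁ c₂ : ℝ≥0, 0 < c₁ ∧ ∀ x : RSp n, ∀ t : ℝ≥0, 0 < t →
    (c₁ : ℝ≥0∞) * ((t : ℝ≥0∞) ^ (α / (n : ℝ)) * phiInv ψ x t) ≤ phiInv φ x t ∧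
    phiInv φ x t ≤ (c₂ : ℝ≥0∞) * ((t : ℝ≥0∞) ^ (α / (n : ℝ)) * phiInv ψ x t)

/-- The characteristic function of a cube, as a real-valued function. -/
def cubeIndicator (Q : Cube n) : RSp n → ℝ := Q.set.indicator 1

end

/-! Write `T = 1 / |Q|`. If `h ∈ L¹ ∩ L^∞` is the error in (A2), then (A0)–(A2) make the values
`φ⁻¹(x, τ)`, `x ∈ Q`, comparable as soon as `τ` dominates `h` and `τ ≲ max(1, T)`. Take
`S = m T` with `m > ∫ h + 1`. The functions `S + h` and `S - h` have integrals of order one over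
`Q`, the second one being larger than `1`, and testing the modular of `χ_Q` against them gives
`‖χ_Q‖_φ ≈ 1 / φ⁻¹(y, T)` for almost every `y ∈ Q` with `h y ≤ S`. The comparability of the
inverses, with the same `h`, passes from `φ` to `ψ`, so that a common `y` serves both functions
and the relation between `φ⁻¹(y, T)` and `ψ⁻¹(y, T)` turns into one between the norms. -/

lemma inv_le_coe_mul_inv_of_le_coe_mul {a b : ℝ≥0∞} {c : ℝ≥0} (hc : c ≠ 0) (h : b ≤ c * a) :
    a⁻¹ ≤ c * b⁻¹ := by
  have hc' : (c : ℝ≥0∞) ≠ 0 := ENNReal.coe_ne_zero.mpr hc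
  rw [← ENNReal.inv_mul_le_iff hc' ENNReal.coe_ne_top,
    ← ENNReal.mul_inv (.inl hc') (.inl ENNReal.coe_ne_top)]
  exact ENNReal.inv_le_inv.mpr h

lemma exists_natCast_comparable {s B R τ : ℝ≥0} (hs : s ≠ 0) (hB : 1 ≤ B) (hR : 1 ≤ R) (hsτ : s ≤ τ)
    (hτR : τ ≤ B * R) :
    ∃ k : ℕ, 1 ≤ k ∧ (k : ℝ≥0) ≤ R ∧ k ≤ (2 * B + s⁻¹) * τ ∧ τ ≤ (2 * B + s⁻¹) * k := by
  set u : ℝ≥0 := max 1 (min τ R)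
  have hk : 1 ≤ ⌊u⌋₊ := Nat.one_le_floor_iff u |>.mpr (le_max_left _ _)
  have hku : (⌊u⌋₊ : ℝ≥0) ≤ u := Nat.floor_le zero_le
  have huk : u ≤ 2 * ⌊u⌋₊ := by
    have hk' : (1 : ℝ≥0) ≤ ⌊u⌋₊ := by exact_mod_cast hk
    calc u ≤ ⌊u⌋₊ + 1 := (Nat.lt_floor_add_one u).le
      _ ≤ 2 * ⌊u⌋₊ := by rw [two_mul]; gcongr
  have huτ : u ≤ (2 * B + s⁻¹) * τ := by
    refine max_le ?_ ((min_le_left _ _).trans (le_mul_of_one_le_left zero_le ?_))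
    · calc (1 : ℝ≥0) = s⁻¹ * s := (inv_mul_cancel₀ hs).symm
        _ ≤ (2 * B + s⁻¹) * τ := by gcongr; exact le_add_self
    · calc (1 : ℝ≥0) ≤ B := hB
        _ ≤ 2 * B + s⁻¹ := le_add_right (le_mul_of_one_le_left zero_le one_le_two)
  have hmin : min τ R ≤ u := le_max_right _ _
  have hτu : τ ≤ B * u := by
    rcases le_total τ R with h | h
    · rw [min_eq_left h] at hmin
      exact hmin.trans (le_mul_of_one_le_left zero_le hB)
    · rw [min_eq_right h] at hmin
      exact hτR.trans (by gcongr)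
  refine ⟨⌊u⌋₊, hk, hku.trans (max_le hR (min_le_right _ _)), hku.trans huτ, ?_⟩
  calc τ ≤ B * (2 * ⌊u⌋₊) := hτu.trans (by gcongr)
    _ = 2 * B * ⌊u⌋₊ := by ring
    _ ≤ (2 * B + s⁻¹) * ⌊u⌋₊ := by gcongr; exact le_self_add

/-- The essential infimum separates the two variables, so Fubini's theorem, which would require
joint measurability, is not involved. -/
lemma exists_mem_ae_forall_forall_le {α ι : Type*} [Countable ι] [MeasurableSpace α]
    {μ : Measure α} {f g : ι → α → ℝ≥0∞} (h : ∀ᵐ x ∂μ, ∀ᵐ y ∂μ, ∀ i, f i x ≤ g i y) :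
    ∃ G ∈ ae μ, ∀ x ∈ G, ∀ y ∈ G, ∀ i, f i x ≤ g i y := by
  have hf : ∀ᵐ x ∂μ, ∀ i, f i x ≤ essInf (g i) μ := by
    filter_upwards [h] with x hx i
    exact le_essInf_of_ae_le _ (hx.mono fun y hy => hy i)
  have hg : ∀ᵐ y ∂μ, ∀ i, essInf (g i) μ ≤ g i y :=
    eventually_countable_forall.mpr fun i => ae_essInf_le
  exact ⟨_, hf.and hg, fun x hx y hy i => (hx.1 i).trans (hy.2 i)⟩

namespace Cube

variable {n : ℕ} (Q : Cube n)

lemma set_eq_preimage_closedBall :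
    Q.set = WithLp.ofLp ⁻¹' Metric.closedBall (WithLp.ofLp Q.c) Q.r := by
  ext y
  simp [Cube.set, dist_pi_le_iff Q.r_pos.le, Real.dist_eq]

lemma measurableSet_set : MeasurableSet Q.set := by
  rw [set_eq_preimage_closedBall]
  exact (PiLp.volume_preserving_ofLp (Fin n)).measurable Metric.isClosed_closedBall.measurableSet

lemma volume_set : volume Q.set = ENNReal.ofReal ((2 * Q.r) ^ n) := by
  rw [set_eq_preimage_closedBall, (PiLp.volume_preserving_ofLp (Fin n)).measure_preimage
    Metric.isClosed_closedBall.nullMeasurableSet, Real.volume_pi_closedBall _ Q.r_pos.le,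
    Fintype.card_fin]

lemma volume_set_ne_zero : volume Q.set ≠ 0 := by
  have := Q.r_pos
  rw [volume_set, ne_eq, ENNReal.ofReal_eq_zero, not_le]
  positivity

lemma volume_set_ne_top : volume Q.set ≠ ∞ := by
  rw [volume_set]
  exact ENNReal.ofReal_ne_top

lemma inv_volume_set_ne_zero : (volume Q.set)⁻¹ ≠ 0 :=
  ENNReal.inv_ne_zero.mpr Q.volume_set_ne_top

lemma inv_volume_set_ne_top : (volume Q.set)⁻¹ ≠ ∞ :=
  ENNReal.inv_ne_top.mpr Q.volume_set_ne_zero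

lemma setLIntegral_mul_inv_volume (c : ℝ≥0∞) : ∫⁻ _ in Q.set, c * (volume Q.set)⁻¹ = c := by
  rw [setLIntegral_const, mul_assoc,
    ENNReal.inv_mul_cancel Q.volume_set_ne_zero Q.volume_set_ne_top, mul_one]

end Cube

section GeneralizedInverse

variable {n : ℕ} {θ η : RSp n → ℝ≥0 → ℝ≥0∞} {x : RSp n} {t : ℝ≥0} {τ : ℝ≥0∞}

lemma phiInv_mono : Monotone (phiInv θ x) := fun _ _ h =>
  sInf_le_sInf <| image_mono fun _ hs => h.trans hs

lemma phiInv_le (h : τ ≤ θ x t) : phiInv θ x τ ≤ t :=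
  sInf_le ⟨t, h, rfl⟩

lemma phiInv_zero : phiInv θ x 0 = 0 :=
  le_antisymm (phiInv_le (t := 0) zero_le) zero_le

lemma apply_lt_of_lt_phiInv (h : t < phiInv θ x τ) : θ x t < τ :=
  not_le.mp fun hτ => h.not_ge (phiInv_le hτ)

lemma le_apply_of_phiInv_lt (hθ : Monotone (θ x)) (h : phiInv θ x τ < t) : τ ≤ θ x t := by
  obtain ⟨_, ⟨s, hs, rfl⟩, hst⟩ := sInf_lt_iff.mp h
  exact le_trans hs (hθ (ENNReal.coe_lt_coe.mp hst).le)

lemma le_phiInv_of_apply_lt (hθ : Monotone (θ x)) (h : θ x t < τ) : t ≤ phiInv θ x τ :=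
  not_lt.mp fun hτ => h.not_ge (le_apply_of_phiInv_lt hθ hτ)

lemma phiInv_le_inv_mul_phiInv_two_mul (hη : Monotone (η x)) {β : ℝ≥0} {b s : ℝ≥0∞} (hβ : β ≠ 0)
    (hs : s ≠ ∞) (h : ∀ t, θ x t ≤ s → η x (β * t) ≤ θ x t + b) (hb : b ≤ τ) (hτ : τ ≤ s) :
    phiInv θ x τ ≤ (β : ℝ≥0∞)⁻¹ * phiInv η x (2 * τ) := by
  refine ENNReal.le_of_forall_nnreal_lt fun t ht => ?_
  have hθt : θ x t < τ := apply_lt_of_lt_phiInv ht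
  have hηt : η x (β * t) < 2 * τ := by
    calc η x (β * t) ≤ θ x t + b := h t (hθt.le.trans hτ)
      _ < τ + τ := ENNReal.add_lt_add_of_lt_of_le (ne_top_of_le_ne_top hs (hb.trans hτ)) hθt hb
      _ = 2 * τ := (two_mul τ).symm
  rw [← ENNReal.mul_le_iff_le_inv (ENNReal.coe_ne_zero.mpr hβ) ENNReal.coe_ne_top]
  exact_mod_cast le_phiInv_of_apply_lt hη hηt

lemma IsWeakPhi.exists_mul_apply_le {Ω : Set (RSp n)} (hθ : IsWeakPhi Ω θ) :
    ∃ L : ℝ≥0, 1 ≤ L ∧ ∀ x ∈ Ω, ∀ m t : ℝ≥0, 1 ≤ m → m * θ x t ≤ θ x (L * m * t) := by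
  obtain ⟨L, hL, hinc⟩ := hθ.almost_inc
  refine ⟨L, hL, fun x hx m t hm => ?_⟩
  rcases eq_or_ne t 0 with rfl | ht
  · simp [hθ.zero x hx]
  rcases (one_le_mul hL hm).eq_or_lt with hLm | hLm
  · rw [(mul_eq_one_iff_of_one_le hL hm).mp hLm.symm |>.2, mul_one]
    exact (one_mul _).le.trans (hθ.mono x hx (le_mul_of_one_le_left zero_le hL))
  have hlt : t < L * m * t := lt_mul_of_one_lt_left (pos_iff_ne_zero.mpr ht) hLm
  have hquot := hinc x hx t (L * m * t) (pos_iff_ne_zero.mpr ht) hlt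
  rw [ENNReal.div_le_iff (ENNReal.coe_ne_zero.mpr ht) ENNReal.coe_ne_top] at hquot
  calc m * θ x t
      ≤ m * (L * (θ x (L * m * t) / (L * m * t : ℝ≥0)) * t) := by gcongr
    _ = (L * m * t : ℝ≥0) * (θ x (L * m * t) / (L * m * t : ℝ≥0)) := by push_cast; ring
    _ ≤ θ x (L * m * t) := ENNReal.mul_div_le

lemma IsWeakPhi.exists_phiInv_mul_le {Ω : Set (RSp n)} (hθ : IsWeakPhi Ω θ) :
    ∃ L : ℝ≥0, 1 ≤ L ∧ ∀ x ∈ Ω, ∀ m : ℝ≥0, 1 ≤ m → ∀ τ,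
      phiInv θ x (m * τ) ≤ (L * m : ℝ≥0) * phiInv θ x τ := by
  obtain ⟨L, hL, hscale⟩ := hθ.exists_mul_apply_le
  refine ⟨L, hL, fun x hx m hm τ => ?_⟩
  have hLm : ((L * m : ℝ≥0) : ℝ≥0∞) ≠ 0 :=
    ENNReal.coe_ne_zero.mpr (zero_lt_one.trans_le (one_le_mul hL hm)).ne'
  rw [← ENNReal.inv_mul_le_iff hLm ENNReal.coe_ne_top]
  refine ENNReal.le_of_forall_nnreal_lt fun t ht => ?_
  by_contra! hlt
  have hτ : τ ≤ θ x t := le_apply_of_phiInv_lt (hθ.mono x hx) hlt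
  have hle : phiInv θ x (m * τ) ≤ (L * m : ℝ≥0) * t := by
    exact_mod_cast phiInv_le ((by gcongr : m * τ ≤ m * θ x t).trans (hscale x hx m t hm))
  exact ht.not_ge ((ENNReal.inv_mul_le_iff hLm ENNReal.coe_ne_top).mpr hle)

end GeneralizedInverse

section OrliczNorm

variable {n : ℕ} {θ : RSp n → ℝ≥0 → ℝ≥0∞} {A : Set (RSp n)} {H : RSp n → ℝ≥0∞} {k : ℝ≥0∞}

lemma lintegral_apply_indicator_one_div (hθ : ∀ x, θ x 0 = 0) (hA : MeasurableSet A) (lam : ℝ≥0) :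
    ∫⁻ x in univ, θ x (‖A.indicator (1 : RSp n → ℝ) x‖₊ / lam) = ∫⁻ x in A, θ x lam⁻¹ := by
  rw [Measure.restrict_univ, ← lintegral_indicator hA]
  refine lintegral_congr fun x => ?_
  by_cases hx : x ∈ A <;> simp [hx, hθ]

lemma orliczNorm_indicator_le_inv (hθ : ∀ x, θ x 0 = 0) (hA : MeasurableSet A)
    (hH : ∫⁻ x in A, H x ≤ 1) (hk : ∀ᵐ x ∂volume.restrict A, k ≤ phiInv θ x (H x)) :
    orliczNorm θ univ (A.indicator 1) ≤ k⁻¹ := by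
  rw [ENNReal.le_inv_iff_le_inv]
  refine ENNReal.le_of_forall_pos_nnreal_lt fun t ht htk => ?_
  rw [ENNReal.le_inv_iff_le_inv, ← ENNReal.coe_inv ht.ne']
  refine sInf_le ⟨t⁻¹, ⟨inv_pos.mpr ht, ?_⟩, rfl⟩
  rw [lintegral_apply_indicator_one_div hθ hA, inv_inv]
  exact (lintegral_mono_ae <| hk.mono fun x hx =>
    (apply_lt_of_lt_phiInv (htk.trans_le hx)).le).trans hH

lemma inv_le_orliczNorm_indicator (hθ : ∀ x, θ x 0 = 0) (hmono : ∀ x, Monotone (θ x))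
    (hA : MeasurableSet A) (hH : 1 < ∫⁻ x in A, H x)
    (hk : ∀ᵐ x ∂volume.restrict A, phiInv θ x (H x) ≤ k) :
    k⁻¹ ≤ orliczNorm θ univ (A.indicator 1) := by
  refine le_sInf ?_
  rintro _ ⟨lam, ⟨hlam, hint⟩, rfl⟩
  rw [lintegral_apply_indicator_one_div hθ hA] at hint
  by_contra! hlt
  have hklam : k < (lam⁻¹ : ℝ≥0) := by
    rwa [ENNReal.coe_inv hlam.ne', ← ENNReal.lt_inv_iff_lt_inv]
  have hle : ∫⁻ x in A, H x ≤ ∫⁻ x in A, θ x lam⁻¹ :=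
    lintegral_mono_ae <| hk.mono fun x hx => le_apply_of_phiInv_lt (hmono x) (hx.trans_lt hklam)
  exact (hH.trans_le hle).not_ge hint

end OrliczNorm

section ErrorTerm

variable {n : ℕ} {θ η : RSp n → ℝ≥0 → ℝ≥0∞}

/-- The error in (A2) need not be measurable. The least admissible one is the supremum over `t` of
`η(x, β t) - θ(x, t)`; restricting `t` to powers of two makes it measurable at the cost of a
factor `2` in `β`. -/
lemma exists_aemeasurable_error (hθ : IsWeakPhi univ θ) (hη : IsWeakPhi univ η)
    {h : RSp n → ℝ≥0∞} {β : ℝ≥0} {s : ℝ≥0∞}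
    (hle : ∀ᵐ x, ∀ t, θ x t ≤ s → η x (β * t) ≤ θ x t + h x) :
    ∃ g : RSp n → ℝ≥0∞, AEMeasurable g ∧ g ≤ᵐ[volume] h ∧
      ∀ x t, θ x t ≤ s → η x (β / 2 * t) ≤ θ x t + g x := by
  have hmeas : ∀ {ζ : RSp n → ℝ≥0 → ℝ≥0∞}, IsWeakPhi univ ζ → ∀ t, AEMeasurable (ζ · t) :=
    fun hζ t => by simpa only [Measure.restrict_univ] using hζ.meas (fun _ => t) measurable_const
  have hcut : Measurable fun u : ℝ≥0∞ × ℝ≥0∞ => if u.1 ≤ s then u.2 - u.1 else 0 :=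
    Measurable.ite (measurable_fst measurableSet_Iic) (measurable_snd.sub measurable_fst)
      measurable_const
  let gap (k : ℤ) (x : RSp n) : ℝ≥0∞ :=
    if θ x (2 ^ k) ≤ s then η x (β * 2 ^ k) - θ x (2 ^ k) else 0
  refine ⟨fun x => ⨆ k, gap k x, ?_, ?_, fun x t ht => ?_⟩
  · exact AEMeasurable.iSup fun k =>
      hcut.comp_aemeasurable ((hmeas hθ (2 ^ k)).prodMk (hmeas hη (β * 2 ^ k)))
  · filter_upwards [hle] with x hx
    refine iSup_le fun k => ?_
    by_cases hk : θ x (2 ^ k) ≤ s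
    · simpa only [gap, if_pos hk] using tsub_le_iff_left.mpr (hx _ hk)
    · simp only [gap, if_neg hk, zero_le]
  · rcases eq_or_ne t 0 with rfl | ht0
    · simp [hη.zero x trivial]
    obtain ⟨k, hkt, htk⟩ := NNReal.exists_mem_Ico_zpow ht0 one_lt_two
    have hθk : θ x (2 ^ k) ≤ θ x t := hθ.mono x trivial hkt
    have hhalf : β / 2 * t ≤ β * 2 ^ k := by
      calc β / 2 * t ≤ β / 2 * 2 ^ (k + 1) := by gcongr
        _ = β * 2 ^ k := by rw [zpow_add_one₀ two_ne_zero]; ring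
    have hgap : η x (β * 2 ^ k) - θ x (2 ^ k) ≤ ⨆ k, gap k x :=
      (le_iSup (gap · x) k).trans' (if_pos (hθk.trans ht)).ge
    calc η x (β / 2 * t) ≤ η x (β * 2 ^ k) := hη.mono x trivial hhalf
      _ ≤ θ x (2 ^ k) + ⨆ k, gap k x := tsub_le_iff_left.mp hgap
      _ ≤ θ x t + ⨆ k, gap k x := by gcongr

/-- The class `L¹ ∩ L^∞` of nonnegative error functions in (A2). -/
structure IsErrorFunction (h : RSp n → ℝ≥0∞) : Prop where
  aemeasurable : AEMeasurable h
  lintegral_ne_top : ∫⁻ x, h x ≠ ∞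
  bounded : ∃ M : ℝ≥0, ∀ᵐ x, h x ≤ M

lemma IsErrorFunction.sup {g h : RSp n → ℝ≥0∞} (hg : IsErrorFunction g) (hh : IsErrorFunction h) :
    IsErrorFunction (g ⊔ h) := by
  obtain ⟨M, hM⟩ := hg.bounded
  obtain ⟨N, hN⟩ := hh.bounded
  refine ⟨hg.aemeasurable.sup hh.aemeasurable, ?_, max M N, ?_⟩
  · refine ne_top_of_le_ne_top
      (ENNReal.add_ne_top.mpr ⟨hg.lintegral_ne_top, hh.lintegral_ne_top⟩) ?_
    rw [← lintegral_add_left' hg.aemeasurable]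
    exact lintegral_mono fun x => max_le le_self_add le_add_self
  · filter_upwards [hM, hN] with x hx hx'
    exact max_le (hx.trans (by gcongr; exact le_max_left _ _))
      (hx'.trans (by gcongr; exact le_max_right _ _))

lemma A2.exists_phiInv_le (hθ : IsWeakPhi univ θ) (hA2 : A2 θ) :
    ∃ h : RSp n → ℝ≥0∞, IsErrorFunction h ∧ ∃ C s : ℝ≥0, 0 < C ∧ 0 < s ∧
      ∀ x y τ, h x ≤ τ → h y ≤ τ → τ ≤ s → phiInv θ x τ ≤ C * phiInv θ y τ := by
  obtain ⟨θi, hθi, h, hint, ⟨M, hM⟩, β, hβ, -, s, hs, hle⟩ := hA2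
  have hdom : ∀ {g : RSp n → ℝ≥0∞}, AEMeasurable g → g ≤ᵐ[volume] h → IsErrorFunction g :=
    fun hg hgh => ⟨hg, ((lintegral_mono_ae hgh).trans_lt hint).ne, M, by
      filter_upwards [hgh, hM] with x hx hx' using hx.trans hx'⟩
  obtain ⟨g₁, hg₁, hg₁h, hle₁⟩ :=
    exists_aemeasurable_error hθ hθi (hle.mono fun x hx t => (hx t).2)
  obtain ⟨g₂, hg₂, hg₂h, hle₂⟩ :=
    exists_aemeasurable_error hθi hθ (hle.mono fun x hx t => (hx t).1)
  obtain ⟨L, hL, hscale⟩ := hθ.exists_phiInv_mul_le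
  have hγ : β / 2 ≠ 0 := by positivity
  generalize β / 2 = γ at hγ hle₁ hle₂
  refine ⟨g₁ ⊔ g₂, (hdom hg₁ hg₁h).sup (hdom hg₂ hg₂h), γ⁻¹ * γ⁻¹ * (L * 4), s / 2,
    by positivity, by positivity, fun x y τ hx hy hτ => ?_⟩
  have h2τ : 2 * τ ≤ s := by
    calc 2 * τ ≤ 2 * (s / 2 : ℝ≥0) := by gcongr
      _ = s := by norm_cast; field_simp
  have hτ2 : τ ≤ 2 * τ := le_mul_of_one_le_left zero_le one_le_two
  calc phiInv θ x τ
      ≤ (γ : ℝ≥0∞)⁻¹ * phiInv (fun _ => θi) y (2 * τ) :=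
        phiInv_le_inv_mul_phiInv_two_mul (η := fun _ => θi) (hθi.mono x trivial) hγ
          ENNReal.coe_ne_top (hle₁ x) (le_sup_left.trans hx) (hτ2.trans h2τ)
    _ ≤ (γ : ℝ≥0∞)⁻¹ * ((γ : ℝ≥0∞)⁻¹ * phiInv θ y (2 * (2 * τ))) := by
        gcongr
        exact phiInv_le_inv_mul_phiInv_two_mul (θ := fun _ => θi) (hθ.mono y trivial) hγ
          ENNReal.coe_ne_top (hle₂ y) (le_sup_right.trans hy |>.trans hτ2) h2τ
    _ = (γ : ℝ≥0∞)⁻¹ * ((γ : ℝ≥0∞)⁻¹ * phiInv θ y ((4 : ℝ≥0) * τ)) := by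
        congr 3; push_cast; ring
    _ ≤ (γ : ℝ≥0∞)⁻¹ * ((γ : ℝ≥0∞)⁻¹ * ((L * 4 : ℝ≥0) * phiInv θ y τ)) := by
        gcongr
        exact hscale y trivial 4 (by norm_num) τ
    _ = (γ⁻¹ * γ⁻¹ * (L * 4) : ℝ≥0) * phiInv θ y τ := by
        rw [ENNReal.coe_mul (γ⁻¹ * γ⁻¹), ENNReal.coe_mul γ⁻¹, ENNReal.coe_inv hγ]; ring

end ErrorTerm

section Comparability

variable {n : ℕ} {θ φ ψ : RSp n → ℝ≥0 → ℝ≥0∞} {h : RSp n → ℝ≥0∞}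

lemma A0.exists_phiInv_one_le (hA0 : A0 univ θ) :
    ∃ C : ℝ≥0, 0 < C ∧ ∃ G ∈ ae volume, ∀ x ∈ G, ∀ y ∈ G,
      phiInv θ x 1 ≤ C * phiInv θ y 1 := by
  obtain ⟨β, hβ, -, hA0⟩ := hA0
  rw [Measure.restrict_univ] at hA0
  refine ⟨β⁻¹ * β⁻¹, by positivity, _, hA0, fun x hx y hy => ?_⟩
  rw [ENNReal.coe_mul, ENNReal.coe_inv hβ.ne', mul_assoc]
  refine hx.2.trans (le_mul_of_one_le_right zero_le ?_)
  calc (1 : ℝ≥0∞) = (β : ℝ≥0∞)⁻¹ * β :=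
        (ENNReal.inv_mul_cancel (ENNReal.coe_ne_zero.mpr hβ.ne') ENNReal.coe_ne_top).symm
    _ ≤ (β : ℝ≥0∞)⁻¹ * phiInv θ y 1 := by gcongr; exact hy.1

/-- Each value of `t` contributes the null set of an essential infimum, hence the restriction to
integers; every `t ≥ 1` is comparable to one of them. -/
lemma A1.exists_phiInv_natCast_le (hA1 : A1 θ) :
    ∃ C : ℝ≥0, 0 < C ∧ ∀ Q : Cube n, volume Q.set ≤ 1 → ∃ G ∈ ae (volume.restrict Q.set),
      ∀ x ∈ G, ∀ y ∈ G, ∀ k : ℕ, 1 ≤ k → k ≤ (volume Q.set)⁻¹ →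
        phiInv θ x k ≤ C * phiInv θ y k := by
  obtain ⟨β, hβ, -, hA1⟩ := hA1
  refine ⟨β⁻¹, by positivity, fun Q hQ => ?_⟩
  obtain ⟨G, hG, hle⟩ := exists_mem_ae_forall_forall_le
    (ι := {k : ℕ // 1 ≤ k ∧ (k : ℝ≥0∞) ≤ (volume Q.set)⁻¹})
    (f := fun k x => β * phiInv θ x k) (g := fun k y => phiInv θ y k) <| by
      filter_upwards [hA1 Q hQ] with x hx
      filter_upwards [hx] with y hxy k
      exact hxy _ (by exact_mod_cast k.2.1) k.2.2
  refine ⟨G, hG, fun x hx y hy k hk hkQ => ?_⟩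
  rw [ENNReal.coe_inv hβ.ne',
    ← ENNReal.mul_le_iff_le_inv (ENNReal.coe_ne_zero.mpr hβ.ne') ENNReal.coe_ne_top]
  exact hle x hx y hy ⟨k, hk, hkQ⟩

lemma exists_phiInv_natCast_le (hA0 : A0 univ θ) (hA1 : A1 θ) :
    ∃ C : ℝ≥0, 0 < C ∧ ∀ Q : Cube n, ∃ G ∈ ae (volume.restrict Q.set),
      ∀ x ∈ G, ∀ y ∈ G, ∀ k : ℕ, 1 ≤ k → k ≤ max 1 (volume Q.set)⁻¹ →
        phiInv θ x k ≤ C * phiInv θ y k := by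
  obtain ⟨C₀, hC₀, G₀, hG₀, hle₀⟩ := hA0.exists_phiInv_one_le
  obtain ⟨C₁, hC₁, hle₁⟩ := hA1.exists_phiInv_natCast_le
  refine ⟨C₀ + C₁, by positivity, fun Q => ?_⟩
  rcases le_total (volume Q.set) 1 with hQ | hQ
  · obtain ⟨G, hG, hle⟩ := hle₁ Q hQ
    refine ⟨G, hG, fun x hx y hy k hk hkQ => ?_⟩
    rw [max_eq_right (ENNReal.one_le_inv.mpr hQ)] at hkQ
    exact (hle x hx y hy k hk hkQ).trans (by gcongr; exact le_add_self)
  · refine ⟨G₀, ae_restrict_le hG₀, fun x hx y hy k hk hkQ => ?_⟩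
    rw [max_eq_left (ENNReal.inv_le_one.mpr hQ)] at hkQ
    obtain rfl : k = 1 := le_antisymm (by exact_mod_cast hkQ) hk
    rw [Nat.cast_one]
    exact (hle₀ x hx y hy).trans (by gcongr; exact le_self_add)

/-- The joint effect of (A0), (A1) and (A2) on the generalized inverse: up to a null set of `Q`,
the values `θ⁻¹(x, τ)`, `x ∈ Q`, are comparable when `τ ≲ max(1, 1/|Q|)` dominates the error `h`.
The constant may depend on the implicit constant `B` in this range, but not on `Q`. -/
def IsInvComparable (θ : RSp n → ℝ≥0 → ℝ≥0∞) (h : RSp n → ℝ≥0∞) : Prop :=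
  ∀ B : ℝ≥0, ∃ C : ℝ≥0, 0 < C ∧ ∀ Q : Cube n, ∃ G ∈ ae (volume.restrict Q.set),
    ∀ x ∈ G, ∀ y ∈ G, ∀ τ, h x ≤ τ → h y ≤ τ → τ ≤ B * max 1 (volume Q.set)⁻¹ →
      phiInv θ x τ ≤ C * phiInv θ y τ

lemma exists_isInvComparable (hθ : IsWeakPhi univ θ) (hA0 : A0 univ θ) (hA1 : A1 θ)
    (hA2 : A2 θ) : ∃ h, IsErrorFunction h ∧ IsInvComparable θ h := by
  obtain ⟨h, hh, C₂, s, hC₂, hs, hle₂⟩ := hA2.exists_phiInv_le hθ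
  obtain ⟨C₁, hC₁, hle₁⟩ := exists_phiInv_natCast_le hA0 hA1
  obtain ⟨L, hL, hscale⟩ := hθ.exists_phiInv_mul_le
  refine ⟨h, hh, fun B => ?_⟩
  set m : ℝ≥0 := 2 * (B + 1) + s⁻¹
  have hm1 : 1 ≤ m := by
    calc (1 : ℝ≥0) ≤ 2 * 1 := by norm_num
      _ ≤ m := le_add_right (by gcongr; exact le_add_self)
  refine ⟨C₂ + L * m * C₁ * (L * m), by positivity, fun Q => ?_⟩
  obtain ⟨G, hG, hle₁⟩ := hle₁ Q
  refine ⟨G, hG, fun x hx y hy τ hxτ hyτ hτ => ?_⟩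
  rcases le_total τ s with hτs | hτs
  · exact (hle₂ x y τ hxτ hyτ hτs).trans (by gcongr; exact le_self_add)
  have hR : max 1 (volume Q.set)⁻¹ ≠ ∞ :=
    (max_lt ENNReal.one_lt_top Q.inv_volume_set_ne_top.lt_top).ne
  have hR1 : 1 ≤ max 1 (volume Q.set)⁻¹ := le_max_left _ _
  lift τ to ℝ≥0 using ne_top_of_le_ne_top (ENNReal.mul_ne_top ENNReal.coe_ne_top hR) hτ
  lift max 1 (volume Q.set)⁻¹ to ℝ≥0 using hR with R
  norm_cast at hR1 hτ hτs
  obtain ⟨k, hk, hkR, hkτ, hτk⟩ := exists_natCast_comparable hs.ne' (le_add_self : 1 ≤ B + 1)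
    hR1 hτs (hτ.trans (by gcongr; exact le_self_add))
  calc phiInv θ x τ
      ≤ phiInv θ x (m * k) := phiInv_mono (by exact_mod_cast hτk)
    _ ≤ (L * m : ℝ≥0) * phiInv θ x k := hscale x trivial m hm1 k
    _ ≤ (L * m : ℝ≥0) * (C₁ * phiInv θ y k) := by
        gcongr
        exact hle₁ x hx y hy k hk (by exact_mod_cast hkR)
    _ ≤ (L * m : ℝ≥0) * (C₁ * phiInv θ y (m * τ)) := by
        gcongr
        exact phiInv_mono (by exact_mod_cast hkτ)
    _ ≤ (L * m : ℝ≥0) * (C₁ * ((L * m : ℝ≥0) * phiInv θ y τ)) := by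
        gcongr
        exact hscale y trivial m hm1 τ
    _ = (L * m * C₁ * (L * m) : ℝ≥0) * phiInv θ y τ := by push_cast; ring
    _ ≤ (C₂ + L * m * C₁ * (L * m) : ℝ≥0) * phiInv θ y τ := by
        gcongr
        exact le_add_self

/-- The relation `φ⁻¹(x, t) ≈ ω(t) ψ⁻¹(x, t)` for a gauge `ω` with values in `(0, ∞)`, uniformly
in `x`. A single constant `d` serves for both bounds. -/
def InvRel (ω : ℝ≥0∞ → ℝ≥0∞) (φ ψ : RSp n → ℝ≥0 → ℝ≥0∞) : Prop :=
  ∃ d : ℝ≥0, 0 < d ∧ ∀ x t, t ≠ 0 → t ≠ ∞ → ω t ≠ 0 ∧ ω t ≠ ∞ ∧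
    phiInv φ x t ≤ d * (ω t * phiInv ψ x t) ∧ ω t * phiInv ψ x t ≤ d * phiInv φ x t

lemma FracInvRel.invRel {α : ℝ} (hrel : FracInvRel α φ ψ) :
    InvRel (fun t => t ^ (α / (n : ℝ))) φ ψ := by
  obtain ⟨c₁, c₂, hc₁, hrel⟩ := hrel
  refine ⟨c₁⁻¹ + c₂, by positivity, fun x t ht0 ht => ?_⟩
  obtain ⟨hlow, hup⟩ := hrel x t.toNNReal (ENNReal.toNNReal_pos ht0 ht)
  rw [ENNReal.coe_toNNReal ht] at hlow hup
  refine ⟨(ENNReal.rpow_pos (pos_iff_ne_zero.mpr ht0) ht).ne',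
    ENNReal.rpow_ne_top_of_ne_zero ht0 ht, hup.trans (by gcongr; exact le_add_self), ?_⟩
  rw [ENNReal.mul_le_iff_le_inv (ENNReal.coe_ne_zero.mpr hc₁.ne') ENNReal.coe_ne_top,
    ← ENNReal.coe_inv hc₁.ne'] at hlow
  exact hlow.trans (by gcongr; exact le_self_add)

lemma InvRel.symm {ω : ℝ≥0∞ → ℝ≥0∞} (hrel : InvRel ω φ ψ) :
    InvRel (fun t => (ω t)⁻¹) ψ φ := by
  obtain ⟨d, hd, hrel⟩ := hrel
  refine ⟨d, hd, fun x t ht0 ht => ?_⟩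
  obtain ⟨hω0, hω, hup, hlow⟩ := hrel x t ht0 ht
  refine ⟨ENNReal.inv_ne_zero.mpr hω, ENNReal.inv_ne_top.mpr hω0, ?_, ?_⟩
  · rw [mul_left_comm]
    exact (ENNReal.mul_le_iff_le_inv hω0 hω).mp hlow
  · rw [ENNReal.inv_mul_le_iff hω0 hω, mul_left_comm]
    exact hup

lemma IsInvComparable.of_invRel {ω : ℝ≥0∞ → ℝ≥0∞} (hφ : IsInvComparable φ h)
    (hrel : InvRel ω ψ φ) : IsInvComparable ψ h := by
  intro B
  obtain ⟨d, hd, hrel⟩ := hrel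
  obtain ⟨C, hC, hle⟩ := hφ B
  refine ⟨d * C * d, by positivity, fun Q => ?_⟩
  obtain ⟨G, hG, hle⟩ := hle Q
  refine ⟨G, hG, fun x hx y hy τ hxτ hyτ hτ => ?_⟩
  rcases eq_or_ne τ 0 with rfl | hτ0
  · simp only [phiInv_zero, zero_le]
  have hτ' : τ ≠ ∞ := ne_top_of_le_ne_top (ENNReal.mul_ne_top ENNReal.coe_ne_top
    (max_lt ENNReal.one_lt_top Q.inv_volume_set_ne_top.lt_top).ne) hτ
  calc phiInv ψ x τ
      ≤ d * (ω τ * phiInv φ x τ) := (hrel x τ hτ0 hτ').2.2.1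
    _ ≤ d * (ω τ * (C * phiInv φ y τ)) := by
        gcongr
        exact hle x hx y hy τ hxτ hyτ hτ
    _ = d * C * (ω τ * phiInv φ y τ) := by ring
    _ ≤ d * C * (d * phiInv ψ y τ) := mul_le_mul_right (hrel y τ hτ0 hτ').2.2.2 _
    _ = (d * C * d : ℝ≥0) * phiInv ψ y τ := by push_cast; ring

end Comparability

section CubeNorm

variable {n : ℕ} {θ φ ψ : RSp n → ℝ≥0 → ℝ≥0∞} {h : RSp n → ℝ≥0∞} {m : ℝ≥0}

lemma frequently_le_mul_inv_volume (hm : ∫⁻ x, h x < m) (Q : Cube n) :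
    ∃ᶠ y in ae (volume.restrict Q.set), h y ≤ m * (volume Q.set)⁻¹ := by
  intro hlt
  refine hm.not_ge ?_
  calc (m : ℝ≥0∞) = ∫⁻ _ in Q.set, m * (volume Q.set)⁻¹ :=
        (Q.setLIntegral_mul_inv_volume m).symm
    _ ≤ ∫⁻ x in Q.set, h x := lintegral_mono_ae (hlt.mono fun x hx => (not_le.mp hx).le)
    _ ≤ ∫⁻ x, h x := setLIntegral_le_lintegral _ _

lemma IsInvComparable.exists_phiInv_inv_volume_le (hcomp : IsInvComparable θ h)
    (hθ : IsWeakPhi univ θ) (hm : 1 ≤ m) (M : ℝ≥0) :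
    ∃ C : ℝ≥0, ∀ Q : Cube n, ∃ G ∈ ae (volume.restrict Q.set), ∀ x ∈ G, ∀ y ∈ G,
      h x ≤ M → h y ≤ m * (volume Q.set)⁻¹ → phiInv θ y (volume Q.set)⁻¹ ≤
        C * phiInv θ x ((2 * m : ℝ≥0∞)⁻¹ * (m * (volume Q.set)⁻¹ + h x)) := by
  obtain ⟨L, -, hscale⟩ := hθ.exists_phiInv_mul_le
  obtain ⟨C, -, hle⟩ := hcomp (m + M)
  have hm2 : 1 ≤ 2 * m := hm.trans (le_mul_of_one_le_left zero_le one_le_two)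
  have hm0 : 2 * m ≠ 0 := (zero_lt_one.trans_le hm2).ne'
  refine ⟨C * (L * (2 * m)), fun Q => ?_⟩
  obtain ⟨G, hG, hle⟩ := hle Q
  refine ⟨G, hG, fun x hx y hy hxM hym => ?_⟩
  set T := (volume Q.set)⁻¹
  have hrange : m * T + h x ≤ (m + M : ℝ≥0) * max 1 T := by
    rw [ENNReal.coe_add, add_mul]
    exact add_le_add (by gcongr; exact le_max_right _ _)
      (hxM.trans (le_mul_of_one_le_right zero_le (le_max_left _ _)))
  calc phiInv θ y T
      ≤ phiInv θ y (m * T + h x) := phiInv_mono <|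
        (le_mul_of_one_le_left zero_le (by exact_mod_cast hm)).trans le_self_add
    _ ≤ C * phiInv θ x (m * T + h x) :=
        hle y hy x hx _ (hym.trans le_self_add) le_add_self hrange
    _ = C * phiInv θ x ((2 * m : ℝ≥0) * ((2 * m : ℝ≥0∞)⁻¹ * (m * T + h x))) := by
        rw [← ENNReal.coe_ofNat, ← ENNReal.coe_mul,
          ENNReal.mul_inv_cancel_left (ENNReal.coe_ne_zero.mpr hm0) ENNReal.coe_ne_top]
    _ ≤ C * ((L * (2 * m) : ℝ≥0) * phiInv θ x ((2 * m : ℝ≥0∞)⁻¹ * (m * T + h x))) := by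
        gcongr
        exact hscale x trivial _ hm2 _
    _ = (C * (L * (2 * m)) : ℝ≥0) * phiInv θ x ((2 * m : ℝ≥0∞)⁻¹ * (m * T + h x)) := by
        rw [ENNReal.coe_mul C, mul_assoc]

lemma IsInvComparable.exists_phiInv_sub_le (hcomp : IsInvComparable θ h)
    (hθ : IsWeakPhi univ θ) (hm : 1 ≤ m) :
    ∃ C : ℝ≥0, 0 < C ∧ ∀ Q : Cube n, ∃ G ∈ ae (volume.restrict Q.set), ∀ x ∈ G, ∀ y ∈ G,
      h y ≤ m * (volume Q.set)⁻¹ →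
        phiInv θ x (m * (volume Q.set)⁻¹ - h x) ≤ C * phiInv θ y (volume Q.set)⁻¹ := by
  obtain ⟨L, hL, hscale⟩ := hθ.exists_phiInv_mul_le
  obtain ⟨C, hC, hle⟩ := hcomp m
  refine ⟨C * (L * m), by positivity, fun Q => ?_⟩
  obtain ⟨G, hG, hle⟩ := hle Q
  refine ⟨G, hG, fun x hx y hy hym => ?_⟩
  set T := (volume Q.set)⁻¹
  rcases le_total (m * T) (h x) with hxm | hxm
  · rw [tsub_eq_zero_of_le hxm, phiInv_zero]
    exact zero_le
  calc phiInv θ x (m * T - h x)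
      ≤ phiInv θ x (m * T) := phiInv_mono tsub_le_self
    _ ≤ C * phiInv θ y (m * T) := hle x hx y hy _ hxm hym (by gcongr; exact le_max_right _ _)
    _ ≤ C * ((L * m : ℝ≥0) * phiInv θ y T) := by
        gcongr
        exact hscale y trivial m hm T
    _ = (C * (L * m) : ℝ≥0) * phiInv θ y T := by rw [ENNReal.coe_mul C, mul_assoc]

lemma exists_orliczNorm_cubeIndicator_le (hθ : IsWeakPhi univ θ) (hh : IsErrorFunction h)
    (hcomp : IsInvComparable θ h) (hm : 1 ≤ m) (hhm : ∫⁻ x, h x ≤ m) :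
    ∃ C : ℝ≥0, ∀ Q : Cube n, ∀ᵐ y ∂volume.restrict Q.set, h y ≤ m * (volume Q.set)⁻¹ →
      orliczNorm θ univ (cubeIndicator Q) ≤ C * (phiInv θ y (volume Q.set)⁻¹)⁻¹ := by
  obtain ⟨M, hM⟩ := hh.bounded
  obtain ⟨C, hle⟩ := hcomp.exists_phiInv_inv_volume_le hθ hm M
  refine ⟨C + 1, fun Q => ?_⟩
  obtain ⟨G, hG, hle⟩ := hle Q
  filter_upwards [hG] with y hy hym
  have hm0 : (2 * m : ℝ≥0∞) ≠ 0 :=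
    mul_ne_zero two_ne_zero (ENNReal.coe_ne_zero.mpr (zero_lt_one.trans_le hm).ne')
  have hmtop : (2 * m : ℝ≥0∞) ≠ ∞ := ENNReal.mul_ne_top ENNReal.ofNat_ne_top ENNReal.coe_ne_top
  have hint : ∫⁻ x in Q.set, (2 * m : ℝ≥0∞)⁻¹ * (m * (volume Q.set)⁻¹ + h x) ≤ 1 := by
    rw [lintegral_const_mul' _ _ (ENNReal.inv_ne_top.mpr hm0),
      lintegral_add_left measurable_const, Q.setLIntegral_mul_inv_volume,
      ENNReal.inv_mul_le_iff hm0 hmtop, mul_one, two_mul]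
    gcongr
    exact (setLIntegral_le_lintegral _ _).trans hhm
  calc orliczNorm θ univ (cubeIndicator Q)
      ≤ (phiInv θ y (volume Q.set)⁻¹ / (C + 1 : ℝ≥0))⁻¹ := by
        refine orliczNorm_indicator_le_inv (fun x => hθ.zero x trivial) Q.measurableSet_set hint ?_
        filter_upwards [hG, ae_restrict_of_ae hM] with x hx hxM
        exact ENNReal.div_le_of_le_mul'
          ((hle x hx y hy hxM hym).trans (by gcongr; exact le_self_add))
    _ = (C + 1 : ℝ≥0) * (phiInv θ y (volume Q.set)⁻¹)⁻¹ :=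
        ENNReal.inv_div (.inl ENNReal.coe_ne_top) (.inl (ENNReal.coe_ne_zero.mpr (by positivity)))

lemma exists_inv_phiInv_le_orliczNorm_cubeIndicator (hθ : IsWeakPhi univ θ)
    (hh : IsErrorFunction h) (hcomp : IsInvComparable θ h) (hm : (∫⁻ x, h x) + 1 < m) :
    ∃ C : ℝ≥0, ∀ Q : Cube n, ∀ᵐ y ∂volume.restrict Q.set, h y ≤ m * (volume Q.set)⁻¹ →
      (phiInv θ y (volume Q.set)⁻¹)⁻¹ ≤ C * orliczNorm θ univ (cubeIndicator Q) := by
  have hm1 : 1 ≤ m := by exact_mod_cast (le_add_self.trans_lt hm).le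
  obtain ⟨C, hC, hle⟩ := hcomp.exists_phiInv_sub_le hθ hm1
  refine ⟨C, fun Q => ?_⟩
  obtain ⟨G, hG, hle⟩ := hle Q
  filter_upwards [hG] with y hy hym
  have hint : 1 < ∫⁻ x in Q.set, (m * (volume Q.set)⁻¹ - h x) := by
    calc (1 : ℝ≥0∞) < m - ∫⁻ x, h x := lt_tsub_iff_left.mpr hm
      _ ≤ (∫⁻ _ in Q.set, m * (volume Q.set)⁻¹) - ∫⁻ x in Q.set, h x := by
          rw [Q.setLIntegral_mul_inv_volume]
          exact tsub_le_tsub_left (setLIntegral_le_lintegral _ _) _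
      _ ≤ ∫⁻ x in Q.set, (m * (volume Q.set)⁻¹ - h x) :=
          lintegral_sub_le' _ _ hh.aemeasurable.restrict
  have hnorm : (C * phiInv θ y (volume Q.set)⁻¹)⁻¹ ≤ orliczNorm θ univ (cubeIndicator Q) := by
    refine inv_le_orliczNorm_indicator (fun x => hθ.zero x trivial) (fun x => hθ.mono x trivial)
      Q.measurableSet_set hint ?_
    filter_upwards [hG] with x hx using hle x hx y hy hym
  have hC0 : (C : ℝ≥0∞) ≠ 0 := ENNReal.coe_ne_zero.mpr hC.ne'
  rwa [ENNReal.mul_inv (.inl hC0) (.inl ENNReal.coe_ne_top),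
    ENNReal.inv_mul_le_iff hC0 ENNReal.coe_ne_top] at hnorm

lemma InvRel.exists_orliczNorm_le {ω : ℝ≥0∞ → ℝ≥0∞} (hrel : InvRel ω φ ψ)
    (hφ : IsWeakPhi univ φ) (hψ : IsWeakPhi univ ψ) (hh : IsErrorFunction h)
    (hφh : IsInvComparable φ h) (hψh : IsInvComparable ψ h) :
    ∃ C : ℝ≥0, ∀ Q : Cube n, orliczNorm φ univ (cubeIndicator Q) ≤
      C * ((ω (volume Q.set)⁻¹)⁻¹ * orliczNorm ψ univ (cubeIndicator Q)) := by
  obtain ⟨m, hm, -⟩ := ENNReal.lt_iff_exists_nnreal_btwn.mp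
    (ENNReal.add_lt_top.mpr ⟨hh.lintegral_ne_top.lt_top, ENNReal.one_lt_top⟩)
  have hm1 : 1 ≤ m := by exact_mod_cast (le_add_self.trans_lt hm).le
  have hhm : ∫⁻ x, h x < m := le_self_add.trans_lt hm
  obtain ⟨A, hA⟩ := exists_orliczNorm_cubeIndicator_le hφ hh hφh hm1 hhm.le
  obtain ⟨B, hB⟩ := exists_inv_phiInv_le_orliczNorm_cubeIndicator hψ hh hψh hm
  obtain ⟨d, hd, hrel⟩ := hrel
  refine ⟨A * d * B, fun Q => ?_⟩
  obtain ⟨y, hym, hyA, hyB⟩ :=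
    ((frequently_le_mul_inv_volume hhm Q).and_eventually ((hA Q).and (hB Q))).exists
  set T := (volume Q.set)⁻¹
  obtain ⟨hω0, hω, -, hlow⟩ := hrel y T Q.inv_volume_set_ne_zero Q.inv_volume_set_ne_top
  calc orliczNorm φ univ (cubeIndicator Q)
      ≤ A * (phiInv φ y T)⁻¹ := hyA hym
    _ ≤ A * (d * (ω T * phiInv ψ y T)⁻¹) := by
        gcongr
        exact inv_le_coe_mul_inv_of_le_coe_mul hd.ne' hlow
    _ = A * (d * ((ω T)⁻¹ * (phiInv ψ y T)⁻¹)) := by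
        rw [ENNReal.mul_inv (.inl hω0) (.inl hω)]
    _ ≤ A * (d * ((ω T)⁻¹ * (B * orliczNorm ψ univ (cubeIndicator Q)))) := by
        gcongr
        exact hyB hym
    _ = (A * d * B : ℝ≥0) * ((ω T)⁻¹ * orliczNorm ψ univ (cubeIndicator Q)) := by
        push_cast; ring

theorem statement15_general {ω : ℝ≥0∞ → ℝ≥0∞} (hφ : IsWeakPhi univ φ) (hψ : IsWeakPhi univ ψ)
    (hrel : InvRel ω φ ψ) (hA0 : A0 univ φ) (hA1 : A1 φ) (hA2 : A2 φ) :
    ∃ c₁ c₂ : ℝ≥0, 0 < c₁ ∧ ∀ Q : Cube n,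
      c₁ * ((ω (volume Q.set)⁻¹)⁻¹ * orliczNorm ψ univ (cubeIndicator Q)) ≤
        orliczNorm φ univ (cubeIndicator Q) ∧
      orliczNorm φ univ (cubeIndicator Q) ≤
        c₂ * ((ω (volume Q.set)⁻¹)⁻¹ * orliczNorm ψ univ (cubeIndicator Q)) := by
  obtain ⟨h, hh, hφh⟩ := exists_isInvComparable hφ hA0 hA1 hA2
  have hψh : IsInvComparable ψ h := hφh.of_invRel hrel.symm
  obtain ⟨C, hC⟩ := hrel.symm.exists_orliczNorm_le hψ hφ hh hψh hφh
  obtain ⟨c₂, hc₂⟩ := hrel.exists_orliczNorm_le hφ hψ hh hφh hψh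
  refine ⟨(C + 1)⁻¹, c₂, by positivity, fun Q => ⟨?_, hc₂ Q⟩⟩
  have hC1 : C + 1 ≠ 0 := by positivity
  obtain ⟨_, _, hrel⟩ := hrel
  obtain ⟨hω0, hω, -⟩ := hrel 0 _ Q.inv_volume_set_ne_zero Q.inv_volume_set_ne_top
  rw [ENNReal.coe_inv hC1, ENNReal.inv_mul_le_iff (ENNReal.coe_ne_zero.mpr hC1) ENNReal.coe_ne_top,
    ENNReal.inv_mul_le_iff hω0 hω, mul_left_comm, ← inv_inv (ω _)]
  exact (hC Q).trans (by gcongr; exact le_self_add)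

end CubeNorm

/-- `‖χ_Q‖_φ ≈ |Q|^{α/n}·‖χ_Q‖_ψ` with constants independent of the
cube `Q`, under the fractional assumptions. -/
theorem statement15 {n : ℕ} (hn : 0 < n) (p q α r : ℝ)
    (φ ψ : RSp n → ℝ≥0 → ℝ≥0∞)
    (hp : 1 < p) (hpq : p ≤ q) (hα : α / (n : ℝ) = 1 / p - 1 / q)
    (hφ : IsWeakPhi Set.univ φ) (hψ : IsWeakPhi Set.univ ψ)
    (hinv : FracInvRel α φ ψ)
    (hr₁ : α / (n : ℝ) < r) (hr₂ : r ≤ 1 / p)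
    (ha0 : A0 Set.univ φ) (ha1 : A1 φ) (ha2 : A2 φ)
    (hainc : AInc p Set.univ φ) (hadec : ADec (1 / r) Set.univ φ) :
    ∃ c₁ c₂ : ℝ≥0, 0 < c₁ ∧ ∀ Q : Cube n,
      (c₁ : ℝ≥0∞) * (volume Q.set ^ (α / (n : ℝ)) *
          orliczNorm ψ Set.univ (cubeIndicator Q)) ≤
        orliczNorm φ Set.univ (cubeIndicator Q) ∧
      orliczNorm φ Set.univ (cubeIndicator Q) ≤
        (c₂ : ℝ≥0∞) * (volume Q.set ^ (α / (n : ℝ)) *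
          orliczNorm ψ Set.univ (cubeIndicator Q)) := by
  simpa only [ENNReal.inv_rpow, inv_inv] using statement15_general hφ hψ hinv.invRel ha0 ha1 ha2
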